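/- For every nonnegative integer ℓ and every natural number n, there exists a finite graph G (parallel edges allowed) together with a set T ⊆ V(G) of terminals such that |V(G)| ≥ n, the set T is (3·2^ℓ)-edge-connected in G, and G does not contain 2^ℓ pairwise edge-disjoint T-connectors. (In particular, there are infinitely many such graphs with terminals for each ℓ.) -/

import Mathlib

/-!
The counterexamples are graphs of clusters. A cluster consists of two terminals and `3k` slots,
where `k = 2 ^ ℓ`; a slot is a vertex of degree three, adjacent to both terminals of its cluster and
to one further vertex, its node. A `T`-path either joins the two terminals of a cluster within a
slot, or runs from a slot to another one through their common node, and edge-disjoint paths do not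
share a slot (`tpath_shape`, `Occupies.common`). So, up to the detour through slots, connectors live
in the graph on the clusters, where a node with two slots is an edge.

The graph is the union of at least `2k + 1` disjoint copies of a piece, glued at one common node,
the hub. Suppose that it has `k` edge-disjoint connectors. A cluster in which `k - δ` of them join
the two terminals within a slot has at most `2k + δ` slots left for other paths, but it counts as
`k + δ` vertices when the terminals joined within slots are identified in each connector. A
connected graph has at least as many edges as vertices minus one, so the `k` connectors together
tolerate a deficit of at most `2k`. Hence some copy is tight (`exists_good_copy`): all its clusters
have exactly `2k` slots used by paths between different slots, and a set of `m` clusters contains at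
most `k (m - 1)` such paths. It remains to find a piece in which every cluster is joined to the hub
robustly enough for `3k`-edge-connectivity and in which this tight situation, `LocalPacking`, is
impossible (`counterexample_of_piece`).

For `k = 1` the piece is the Petersen graph with one vertex as the hub. The used edges leave one
edge unused at every cluster. If they also leave one unused at the hub, the unused edges form a
perfect matching, whose complement in the Petersen graph consists of two pentagons; the pentagon
avoiding the hub has five clusters and five used paths. If instead no hub edge is used, there are
nine used paths on nine clusters (`not_localPacking_petersen`).

For even `k` the piece has a central cluster, each of whose slots shares its node with the first
bundles of two arms. An arm is a chain of three clusters joined by bundles of `3k / 2` parallel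
edges and ending at the hub. As a bundle between two clusters has at most `k` used edges, the first
bundle of an arm has exactly `k` used slots. The number of used slots at a node is even, so no slot
of the centre is used, which contradicts tightness (`not_localPacking_even`).
-/

/-
Graphs with terminals are modelled as multigraphs: a vertex type `V`, an edge
type `E`, and an incidence map `ends : E → Sym2 V` assigning to each edge its
(unordered) pair of endvertices.  Parallel edges are allowed since distinct
edges may have equal endpoint pairs.
-/

namespace TConnectors

variable {V E : Type}

/-- A walk in a multigraph given by an incidence map `ends : E → Sym2 V`. -/
inductive Walk (ends : E → Sym2 V) : V → V → Type where
  | nil (v : V) : Walk ends v v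
  | cons {u v w : V} (e : E) (he : ends e = s(u, v)) (p : Walk ends v w) : Walk ends u w

/-- The list of edges of a walk. -/
def Walk.edges {ends : E → Sym2 V} : ∀ {u v : V}, Walk ends u v → List E
  | _, _, .nil _ => []
  | _, _, .cons e _ p => e :: p.edges

/-- The list of vertices of a walk. -/
def Walk.support {ends : E → Sym2 V} : ∀ {u v : V}, Walk ends u v → List V
  | _, v, .nil _ => [v]
  | u, _, .cons _ _ p => u :: p.support

/-- `T` is `d`-edge-connected in the multigraph: there is no edge-cut of
size smaller than `d` separating two vertices of `T`, i.e. after deleting any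
set of fewer than `d` edges, any two terminals are still joined by a walk. -/
def EdgeConnectedIn (ends : E → Sym2 V) (T : Set V) (d : ℕ) : Prop :=
  ∀ S : Finset E, S.card < d → ∀ t₁ ∈ T, ∀ t₂ ∈ T,
    ∃ p : Walk ends t₁ t₂, ∀ e ∈ p.edges, e ∉ S

/-- A `T`-path: a nontrivial path whose endvertices belong to `T` and whose
internal vertices lie outside `T`. -/
def IsTPath (ends : E → Sym2 V) (T : Set V) {u v : V} (p : Walk ends u v) : Prop :=
  u ∈ T ∧ v ∈ T ∧ p.support.Nodup ∧ p.edges ≠ [] ∧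
    ∀ w ∈ p.support.tail.dropLast, w ∉ T

/-- `C` is the edge set of a `T`-connector: a union of a family of pairwise
edge-disjoint `T`-paths such that the auxiliary multigraph on vertex set `T`,
with one edge joining the two endvertices of each `T`-path of the family,
is connected. -/
def IsConnector (ends : E → Sym2 V) (T : Set V) (C : Set E) : Prop :=
  ∃ (m : ℕ) (a b : Fin m → V) (p : ∀ i, Walk ends (a i) (b i)),
    (∀ i, IsTPath ends T (p i)) ∧
    (∀ i j, i ≠ j → ∀ e ∈ (p i).edges, e ∉ (p j).edges) ∧
    C = { e | ∃ i, e ∈ (p i).edges } ∧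
    ∀ t₁ ∈ T, ∀ t₂ ∈ T,
      Relation.ReflTransGen
        (fun x y => ∃ i, (a i = x ∧ b i = y) ∨ (a i = y ∧ b i = x)) t₁ t₂

/-! ### Spanning-tree bound -/

/-- The spanning-tree bound: if the vertices of a connected multigraph with vertex set `X` and edges
`ι` are identified along `π`, then the number of classes is at most one more than the number of
edges joining different classes. -/
lemma card_image_le_of_connected {X Y ι : Type} [Fintype X] [Fintype ι] [DecidableEq Y]
    (a b : ι → X)
    (h : ∀ x y, Relation.ReflTransGen
      (fun x y => ∃ i, (a i = x ∧ b i = y) ∨ (a i = y ∧ b i = x)) x y) (π : X → Y) :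
    (Finset.univ.image π).card ≤
      (Finset.univ.filter fun i => π (a i) ≠ π (b i)).card + 1 := by
  classical
  rcases isEmpty_or_nonempty X with hX | ⟨⟨x₀⟩⟩
  · simp
  let G : SimpleGraph (Set.range π) :=
    { Adj := fun x y => x ≠ y ∧ ∃ i, (π (a i) = x ∧ π (b i) = y) ∨ (π (a i) = y ∧ π (b i) = x)
      symm := ⟨fun x y ⟨hne, i, hi⟩ => ⟨hne.symm, i, hi.symm⟩⟩
      loopless := ⟨fun x hx => hx.1 rfl⟩ }
  have hreach : ∀ x y, G.Reachable ⟨π x, x, rfl⟩ ⟨π y, y, rfl⟩ := by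
    intro x y
    induction h x y with
    | refl => exact SimpleGraph.Reachable.refl _
    | @tail y z _ hyz ih =>
      refine ih.trans ?_
      by_cases he : π y = π z
      · have : (⟨π y, y, rfl⟩ : Set.range π) = ⟨π z, z, rfl⟩ := Subtype.ext he
        rw [this]
      · obtain ⟨i, hi⟩ := hyz
        refine SimpleGraph.Adj.reachable ⟨fun hh => he (congrArg Subtype.val hh), i, ?_⟩
        rcases hi with ⟨rfl, rfl⟩ | ⟨rfl, rfl⟩ <;> simp
  have hconn : G.Connected := by
    have : Nonempty (Set.range π) := ⟨⟨π x₀, x₀, rfl⟩⟩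
    refine ⟨?_⟩
    rintro ⟨_, x, rfl⟩ ⟨_, y, rfl⟩
    exact hreach x y
  have h1 := hconn.card_vert_le_card_edgeSet_add_one
  have h2 : Nat.card (Set.range π) = (Finset.univ.image π).card := by
    rw [← Set.image_univ, ← Finset.coe_univ, ← Finset.coe_image, Nat.card_coe_set_eq,
      Set.ncard_coe_finset]
  -- every edge of the quotient graph comes from a non-loop index
  have h3 : Nat.card G.edgeSet ≤ Nat.card {i // π (a i) ≠ π (b i)} := by
    refine Nat.card_le_card_of_surjective
      (fun i : {i // π (a i) ≠ π (b i)} =>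
        (⟨s(⟨π (a i), a i, rfl⟩, ⟨π (b i), b i, rfl⟩), fun hh => i.2 (congrArg Subtype.val hh),
          i, Or.inl ⟨rfl, rfl⟩⟩ : G.edgeSet)) ?_
    rintro ⟨e, he⟩
    induction e using Sym2.ind with
    | _ x y =>
      obtain ⟨hne, i, hi⟩ := he
      have hne' : (x : Y) ≠ y := fun hh => hne (Subtype.ext hh)
      rcases hi with ⟨h1, h2⟩ | ⟨h1, h2⟩
      · refine ⟨⟨i, by rw [h1, h2]; exact hne'⟩, ?_⟩
        simp [h1, h2]
      · refine ⟨⟨i, by rw [h1, h2]; exact hne'.symm⟩, ?_⟩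
        simp [h1, h2, Sym2.eq_swap]
  rw [Nat.card_eq_fintype_card (α := {i // π (a i) ≠ π (b i)}), Fintype.card_subtype] at h3
  omega

/-! ### Graphs of clusters and their `T`-paths -/

section Construction

variable {P D O : Type}

/-- The vertices of the graph of clusters: two terminals `(p, b)` for every cluster `p : P`, one
vertex for every slot `(p, d)` of a cluster, and the nodes `O`. -/
abbrev Vert (P D O : Type) : Type := (P × Bool) ⊕ (P × D) ⊕ O

/-- The edges of the graph of clusters: the slot `s` has one edge `(s, some b)` to each of the two
terminals of its cluster, and one edge `(s, none)` to its node. -/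
abbrev Edge (P D : Type) : Type := (P × D) × Option Bool

/-- The incidence map of the graph of clusters in which the slot `s` is attached to the
node `g s`. -/
def inc (g : P × D → O) : Edge P D → Sym2 (Vert P D O)
  | (s, some b) => s(.inl (s.1, b), .inr (.inl s))
  | (s, none) => s(.inr (.inl s), .inr (.inr (g s)))

/-- The set of terminals of the graph of clusters. -/
def terms (P D O : Type) : Set (Vert P D O) := Set.range Sum.inl

lemma inc_term {g : P × D → O} {e : Edge P D} {x : P × Bool} {v : Vert P D O}
    (h : inc g e = s(.inl x, v)) : ∃ d, e = ((x.1, d), some x.2) ∧ v = .inr (.inl (x.1, d)) := by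
  obtain ⟨⟨p, d⟩, _ | b⟩ := e
  · simp [inc] at h
  · simp [inc] at h
    obtain ⟨rfl, rfl⟩ := h
    exact ⟨d, rfl, rfl⟩

lemma inc_slot {g : P × D → O} {e : Edge P D} {s : P × D} {v : Vert P D O}
    (h : inc g e = s(.inr (.inl s), v)) :
    (∃ b, e = (s, some b) ∧ v = .inl (s.1, b)) ∨ (e = (s, none) ∧ v = .inr (.inr (g s))) := by
  obtain ⟨t, _ | b⟩ := e
  · simp [inc] at h
    obtain ⟨rfl, rfl⟩ := h
    exact Or.inr ⟨rfl, rfl⟩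
  · simp [inc] at h
    obtain ⟨rfl, rfl⟩ := h
    exact Or.inl ⟨b, rfl, rfl⟩

lemma inc_node {g : P × D → O} {e : Edge P D} {o : O} {v : Vert P D O}
    (h : inc g e = s(.inr (.inr o), v)) :
    ∃ s, e = (s, none) ∧ v = .inr (.inl s) ∧ g s = o := by
  obtain ⟨t, _ | b⟩ := e
  · simp [inc] at h
    obtain ⟨rfl, rfl⟩ := h
    exact ⟨t, rfl, rfl, rfl⟩
  · simp [inc] at h

lemma Walk.support_eq_cons {V E : Type} {ends : E → Sym2 V} {u v : V} (p : Walk ends u v) :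
    ∃ l, p.support = u :: l := by
  cases p <;> simp [Walk.support]

/-- A walk starting at a terminal, all of whose vertices but the last are not terminals, is
trivial. -/
lemma Walk.cases_of_end {V E : Type} {ends : E → Sym2 V} {T : Set V} {u v : V}
    (p : Walk ends u v) (hu : u ∈ T) (h : ∀ w ∈ p.support.dropLast, w ∉ T) :
    u = v ∧ p.edges = [] := by
  cases p with
  | nil => simp [Walk.edges]
  | cons e he q =>
    obtain ⟨l, hl⟩ := q.support_eq_cons
    exact absurd hu (h u (by simp [Walk.support, hl]))

/-- The edge list `L` contains at least two of the three edges at the slot `s`, one of them being an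
edge to a terminal. -/
def Occupies (L : List (Edge P D)) (s : P × D) : Prop :=
  (∃ b, (s, some b) ∈ L) ∧ ((∀ b, (s, some b) ∈ L) ∨ (s, none) ∈ L)

/-- As a slot has only three edges, two paths occupying the same slot share an edge. So edge-disjoint
`T`-paths occupy different slots. -/
lemma Occupies.common {L L' : List (Edge P D)} {s : P × D} (h : Occupies L s)
    (h' : Occupies L' s) : ∃ e ∈ L, e ∈ L' := by
  obtain ⟨⟨b, hb⟩, h2⟩ := h
  obtain ⟨⟨b', hb'⟩, h2'⟩ := h'
  rcases h2 with h2 | h2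
  · exact ⟨_, h2 b', hb'⟩
  · rcases h2' with h2' | h2'
    · exact ⟨_, hb, h2' b⟩
    · exact ⟨_, h2, h2'⟩

/-- A `T`-path leaves its first terminal through a slot `f` and enters its last terminal through a
slot `l`. Either `f = l` and the path joins the two terminals of a cluster inside the slot, or it
runs through the common node of `f` and `l`. -/
lemma tpath_shape {g : P × D → O} {u v : Vert P D O} (w : Walk (inc g) u v)
    (h : IsTPath (inc g) (terms P D O) w) :
    ∃ (f l : P × D) (β β' : Bool), u = .inl (f.1, β) ∧ v = .inl (l.1, β') ∧ g f = g l ∧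
      Occupies w.edges f ∧ Occupies w.edges l := by
  obtain ⟨⟨x, rfl⟩, hv, hnd, hne, hint⟩ := h
  cases w with
  | nil => simp [Walk.edges] at hne
  | cons e he q =>
  obtain ⟨d, rfl, rfl⟩ := inc_term he
  cases q with
  | nil => simp [terms] at hv
  | cons e he q =>
  rcases inc_slot he with ⟨b, rfl, rfl⟩ | ⟨rfl, rfl⟩
  · -- the path returns at once to the other terminal of its cluster
    obtain ⟨rfl, hq⟩ := q.cases_of_end (T := terms P D O) ⟨_, rfl⟩ (by
      obtain ⟨l, hl⟩ := q.support_eq_cons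
      intro y hy
      exact hint y (by simp [Walk.support, hl] at hy ⊢; exact Or.inr hy))
    have hb : x.2 ≠ b := by
      rintro rfl
      obtain ⟨l, hl⟩ := q.support_eq_cons
      simp [Walk.support, hl] at hnd
    have hall : ∀ c, c = x.2 ∨ c = b := by
      intro c
      cases hx : x.2 <;> cases b <;> cases c <;> simp_all
    refine ⟨(x.1, d), (x.1, d), x.2, b, rfl, rfl, rfl, ?_⟩
    rw [and_self_iff]
    refine ⟨⟨b, by simp [Walk.edges]⟩, Or.inl fun c => ?_⟩
    rcases hall c with rfl | rfl <;> simp [Walk.edges]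
  · cases q with
    | nil => simp [terms] at hv
    | cons e he q =>
    obtain ⟨s, rfl, rfl, hs⟩ := inc_node he
    cases q with
    | nil => simp [terms] at hv
    | cons e he q =>
    rcases inc_slot he with ⟨b, rfl, rfl⟩ | ⟨rfl, rfl⟩
    · obtain ⟨rfl, hq⟩ := q.cases_of_end (T := terms P D O) ⟨_, rfl⟩ (by
        obtain ⟨l, hl⟩ := q.support_eq_cons
        intro y hy
        exact hint y (by simp [Walk.support, hl] at hy ⊢; simp [hy]))
      refine ⟨(x.1, d), s, x.2, b, rfl, rfl, hs.symm, ?_, ?_⟩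
      · exact ⟨⟨x.2, by simp [Walk.edges]⟩, Or.inr (by simp [Walk.edges])⟩
      · exact ⟨⟨b, by simp [Walk.edges]⟩, Or.inr (by simp [Walk.edges])⟩
    · -- the path would visit the same node twice
      exfalso
      obtain ⟨l, hl⟩ := q.support_eq_cons
      simp [Walk.support, hl, hs] at hnd

end Construction

/-! ### Used slots of a family of paths -/

section Counting

open Classical in
/-- Given paths `j` with end slots `f j` and `l j`, no slot being used by two paths, let `U` be the
set of end slots of the paths with `f j ≠ l j`, and let `τ` exchange the two end slots of such a
path. The last clause counts the slots of the paths that satisfy a symmetric relation `R`. -/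
lemma exists_mate {J A O : Type} [Fintype J] [Fintype A] (g : A → O) (f l : J → A)
    (hg : ∀ j, g (f j) = g (l j))
    (hdisj : ∀ j j' s, (s = f j ∨ s = l j) → (s = f j' ∨ s = l j') → j = j') :
    ∃ (U : Finset A) (τ : A → A),
      (∀ u, u ∈ U ↔ ∃ j, f j ≠ l j ∧ (u = f j ∨ u = l j)) ∧
      (∀ u ∈ U, τ u ∈ U ∧ τ u ≠ u ∧ τ (τ u) = u ∧ g (τ u) = g u) ∧
      ∀ R : A → A → Prop, (∀ x y, R x y → R y x) →
        (U.filter fun u => R u (τ u)).card =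
          2 * (Finset.univ.filter fun j => f j ≠ l j ∧ R (f j) (l j)).card := by
  let τ : A → A := fun u =>
    if h : ∃ j, u = f j then l h.choose else if h : ∃ j, u = l j then f h.choose else u
  have hτf : ∀ j, τ (f j) = l j := by
    intro j
    have h : ∃ j', f j = f j' := ⟨j, rfl⟩
    have hj : j = h.choose := hdisj _ _ (f j) (Or.inl rfl) (Or.inl h.choose_spec)
    simp only [τ, dif_pos h]
    rw [← hj]
  have hτl : ∀ j, f j ≠ l j → τ (l j) = f j := by
    intro j hne
    have h' : ¬ ∃ j', l j = f j' := by
      rintro ⟨j', hj'⟩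
      obtain rfl := hdisj _ _ (l j) (Or.inr rfl) (Or.inl hj')
      exact hne hj'.symm
    have h : ∃ j', l j = l j' := ⟨j, rfl⟩
    have hj : j = h.choose := hdisj _ _ (l j) (Or.inr rfl) (Or.inr h.choose_spec)
    simp only [τ, dif_neg h', dif_pos h]
    rw [← hj]
  refine ⟨Finset.univ.filter fun u => ∃ j, f j ≠ l j ∧ (u = f j ∨ u = l j), τ,
    fun u => by simp, ?_, ?_⟩
  · intro u hu
    simp only [Finset.mem_filter, Finset.mem_univ, true_and] at hu ⊢
    obtain ⟨j, hne, rfl | rfl⟩ := hu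
    · rw [hτf, hτl j hne]
      exact ⟨⟨j, hne, Or.inr rfl⟩, hne.symm, rfl, (hg j).symm⟩
    · rw [hτl j hne, hτf]
      exact ⟨⟨j, hne, Or.inl rfl⟩, hne, rfl, hg j⟩
  · intro R hR
    have : (Finset.univ.filter fun u => ∃ j, f j ≠ l j ∧ (u = f j ∨ u = l j)).filter
        (fun u => R u (τ u)) =
        (Finset.univ.filter fun j => f j ≠ l j ∧ R (f j) (l j)).biUnion
          fun j => {f j, l j} := by
      ext u
      simp only [Finset.mem_filter, Finset.mem_univ, true_and, Finset.mem_biUnion,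
        Finset.mem_insert, Finset.mem_singleton]
      constructor
      · rintro ⟨⟨j, hne, rfl | rfl⟩, hr⟩
        · rw [hτf] at hr
          exact ⟨j, ⟨hne, hr⟩, Or.inl rfl⟩
        · rw [hτl j hne] at hr
          exact ⟨j, ⟨hne, hR _ _ hr⟩, Or.inr rfl⟩
      · rintro ⟨j, ⟨hne, hr⟩, rfl | rfl⟩
        · exact ⟨⟨j, hne, Or.inl rfl⟩, by rwa [hτf]⟩
        · exact ⟨⟨j, hne, Or.inr rfl⟩, by rw [hτl j hne]; exact hR _ _ hr⟩
    rw [this, Finset.card_biUnion, Finset.sum_const_nat (m := 2), mul_comm]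
    · intro j hj
      simp only [Finset.mem_filter] at hj
      exact Finset.card_pair hj.2.1
    · intro j _ j' _ hne
      rw [Function.onFun, Finset.disjoint_left]
      intro s hs hs'
      simp only [Finset.mem_insert, Finset.mem_singleton] at hs hs'
      exact hne (hdisj _ _ s hs hs')

/-- `outer U p` is the number of slots of the cluster `p` lying in `U`. -/
noncomputable def outer {P D : Type} [Fintype D] (U : Finset (P × D)) (p : P) : ℕ :=
  Nat.card {d : D // (p, d) ∈ U}

open Classical in
/-- For `k` families of paths and a cluster `p`, the slots of `p` in `U` (ends of paths between
different slots) are distinct from those spent by the families that join the two terminals of `p`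
within a single slot. -/
lemma outer_add_inner_le {P D : Type} [Fintype D] {k : ℕ} {ι : Fin k → Type}
    (f l : (Σ i, ι i) → P × D)
    (hdisj : ∀ j j' s, (s = f j ∨ s = l j) → (s = f j' ∨ s = l j') → j = j')
    (U : Finset (P × D)) (hU : ∀ u, u ∈ U → ∃ j, f j ≠ l j ∧ (u = f j ∨ u = l j)) (p : P) :
    outer U p + (Finset.univ.filter fun i => ∃ j, f ⟨i, j⟩ = l ⟨i, j⟩ ∧ (f ⟨i, j⟩).1 = p).card
      ≤ Fintype.card D := by
  rw [outer, ← Fintype.card_subtype, ← Nat.card_eq_fintype_card, ← Nat.card_eq_fintype_card,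
    ← Nat.card_sum]
  let F : {d : D // (p, d) ∈ U} ⊕
      {i : Fin k // ∃ j, f ⟨i, j⟩ = l ⟨i, j⟩ ∧ (f ⟨i, j⟩).1 = p} → D :=
    Sum.elim (fun d => d.1) (fun i => (f ⟨i.1, i.2.choose⟩).2)
  have hF : ∀ i : {i : Fin k // ∃ j, f ⟨i, j⟩ = l ⟨i, j⟩ ∧ (f ⟨i, j⟩).1 = p},
      f ⟨i.1, i.2.choose⟩ = (p, F (.inr i)) := fun i => Prod.ext i.2.choose_spec.2 rfl
  refine Nat.card_le_card_of_injective F ?_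
  have key : ∀ (d : {d : D // (p, d) ∈ U})
      (i : {i : Fin k // ∃ j, f ⟨i, j⟩ = l ⟨i, j⟩ ∧ (f ⟨i, j⟩).1 = p}),
      F (.inl d) ≠ F (.inr i) := by
    intro d i h
    obtain ⟨j, hne, hj⟩ := hU _ d.2
    obtain rfl := hdisj j ⟨i.1, i.2.choose⟩ (p, d.1) hj (Or.inl (by rw [hF, ← h]; rfl))
    exact hne i.2.choose_spec.1
  rintro (d | i) (d' | i') h
  · exact congrArg _ (Subtype.ext h)
  · exact absurd h (key _ _)
  · exact absurd h.symm (key _ _)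
  · have := hdisj ⟨i.1, i.2.choose⟩ ⟨i'.1, i'.2.choose⟩ (p, F (.inr i)) (Or.inl (hF i).symm)
      (Or.inl (by rw [hF, ← h]))
    exact congrArg _ (Subtype.ext (congrArg Sigma.fst this))

end Counting

/-! ### Existence of a tight copy -/

section GoodCopy

open Classical in
/-- Consider `k` connectors, given by their paths `j` with end slots `f j` and `l j`, in a graph made
of more than `2 * k` copies `c : C` of a piece with `3 * k` slots per cluster. In at least one copy,
every cluster has exactly `2 * k` slots used by paths between different slots, and each nonempty set
`S` of clusters satisfies the bound of `k` forests (where each path inside `S` is counted at both of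
its ends).

For a contradiction, choose a violated condition in every copy; `S c = ∅` means that the condition
on the number of used slots fails. Each connector is contracted along `π`: the two terminals of a
cluster are identified when the connector joins them within a slot, and all terminals of the
clusters of `S c` are identified. If `δ` connectors do not join the terminals of a cluster within a
slot, they contribute `k + δ` classes in all but only `2 * k + δ` slots are left for paths between
different slots. Hence every violated condition makes the number of ends of paths not contracted
smaller than twice the number of classes, whereas by `card_image_le_of_connected` the total deficit of the `k` connectors
is at most `2 * k`. -/
theorem exists_good_copy {C P D O : Type} [Fintype C] [Fintype P] [Fintype D] {k : ℕ}
    {ι : Fin k → Type} [∀ i, Fintype (ι i)] (g : (C × P) × D → O)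
    (hD : Fintype.card D = 3 * k) (hC : 2 * k < Fintype.card C)
    (f l : (Σ i, ι i) → (C × P) × D) (β β' : (Σ i, ι i) → Bool)
    (hg : ∀ j, g (f j) = g (l j))
    (hdisj : ∀ j j' s, (s = f j ∨ s = l j) → (s = f j' ∨ s = l j') → j = j')
    (hconn : ∀ i x y, Relation.ReflTransGen
      (fun x y => ∃ j : ι i,
        (((f ⟨i, j⟩).1, β ⟨i, j⟩) = x ∧ ((l ⟨i, j⟩).1, β' ⟨i, j⟩) = y) ∨
        (((f ⟨i, j⟩).1, β ⟨i, j⟩) = y ∧ ((l ⟨i, j⟩).1, β' ⟨i, j⟩) = x)) x y) :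
    ∃ (U : Finset ((C × P) × D)) (τ : (C × P) × D → (C × P) × D) (c : C),
      (∀ u ∈ U, τ u ∈ U ∧ τ u ≠ u ∧ τ (τ u) = u ∧ g (τ u) = g u) ∧
      (∀ p, outer U (c, p) = 2 * k) ∧
      ∀ S : Finset P, S.Nonempty →
        (U.filter fun u => u.1.1 = c ∧ u.1.2 ∈ S ∧ (τ u).1.1 = c ∧ (τ u).1.2 ∈ S).card
          ≤ 2 * k * (S.card - 1) := by
  obtain ⟨U, τ, hU, hτ, hcount⟩ := exists_mate g f l hg hdisj
  by_contra hno
  have hbad : ∀ c, ∃ S : Finset P, (S = ∅ ∧ ∃ p, outer U (c, p) ≠ 2 * k) ∨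
      (S.Nonempty ∧ (∀ p, outer U (c, p) = 2 * k) ∧ 2 * k * (S.card - 1) <
        (U.filter fun u => u.1.1 = c ∧ u.1.2 ∈ S ∧ (τ u).1.1 = c ∧ (τ u).1.2 ∈ S).card) := by
    intro c
    by_contra! h
    refine hno ⟨U, τ, c, hτ, ?_, ?_⟩
    · exact (h ∅).1 rfl
    · exact fun S hS => (h S).2 hS (h ∅ |>.1 rfl)
  choose S hS using hbad
  have hrep : ∀ c, ∃ r : P, (S c).Nonempty → r ∈ S c := by
    intro c
    rcases hS c with ⟨_, p, _⟩ | ⟨⟨p, hp⟩, _⟩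
    · exact ⟨p, fun ⟨q, hq⟩ => by simp_all⟩
    · exact ⟨p, fun _ => hp⟩
  choose rep hrep using hrep
  let inner : Fin k → C × P → Prop := fun i p =>
    ∃ j, f ⟨i, j⟩ = l ⟨i, j⟩ ∧ (f ⟨i, j⟩).1 = p
  let R : (C × P) × D → (C × P) × D → Prop := fun u v =>
    u.1.1 = v.1.1 ∧ u.1.2 ∈ S u.1.1 ∧ v.1.2 ∈ S u.1.1
  have hRsymm : ∀ u v, R u v → R v u := by
    rintro u v ⟨h1, h2, h3⟩
    exact ⟨h1.symm, h1 ▸ h3, h1 ▸ h2⟩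
  let π : Fin k → (C × P) × Bool → (C × P) × Bool := fun i x =>
    if x.1.2 ∈ S x.1.1 then ((x.1.1, rep x.1.1), false)
    else if inner i x.1 then (x.1, false) else x
  let A : C → ℕ := fun c => ((U.filter fun u => R u (τ u)).filter fun u => u.1.1 = c).card
  let Fx : Fin k → C → ℕ := fun i c =>
    ((Finset.univ.filter fun x => π i x = x).filter fun x => x.1.1 = c).card
  -- `Fx i c` is the number of classes of `π i` with representative in the copy `c`, and `A c` is
  -- the number of ends of paths lying inside `S c`
  have hquot : ∀ i, ∑ c, Fx i c ≤ (Finset.univ.filter fun j : ι i =>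
      f ⟨i, j⟩ ≠ l ⟨i, j⟩ ∧ ¬ R (f ⟨i, j⟩) (l ⟨i, j⟩)).card + 1 := by
    intro i
    have h0 : ∑ c, Fx i c = (Finset.univ.filter fun x => π i x = x).card :=
      (Finset.card_eq_sum_card_fiberwise (fun _ _ => by simp)).symm
    rw [h0]
    have h1 := card_image_le_of_connected _ _ (hconn i) (π i)
    refine le_trans (Finset.card_le_card ?_) (h1.trans (Nat.add_le_add_right
      (Finset.card_le_card ?_) 1))
    · intro x hx
      simp only [Finset.mem_filter, Finset.mem_univ, true_and, Finset.mem_image] at hx ⊢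
      exact ⟨x, hx⟩
    · intro j hj
      simp only [Finset.mem_filter, Finset.mem_univ, true_and] at hj ⊢
      refine ⟨fun he => hj ?_, fun hR => hj ?_⟩
      · have hin : inner i (f ⟨i, j⟩).1 := ⟨j, he, rfl⟩
        simp only [π, ← he, if_pos hin]
      · obtain ⟨h1, h2, h3⟩ := hR
        rw [h1] at h2 h3
        simp only [π, h1, if_pos h2, if_pos h3]
  have hsum : ∑ c, ∑ i, Fx i c ≤ (Finset.univ.filter fun j =>
      f j ≠ l j ∧ ¬ R (f j) (l j)).card + k := by
    rw [Finset.sum_comm]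
    refine (Finset.sum_le_sum fun i _ => hquot i).trans (le_of_eq ?_)
    rw [Finset.sum_add_distrib]
    congr 1
    · simp only [Finset.card_filter]
      rw [Fintype.sum_sigma]
    · simp
  have hout : (∑ c, A c) + 2 * (Finset.univ.filter fun j =>
      f j ≠ l j ∧ ¬ R (f j) (l j)).card = ∑ c, ∑ p, outer U (c, p) := by
    have h0 : ∑ c, A c = (U.filter fun u => R u (τ u)).card :=
      (Finset.card_eq_sum_card_fiberwise (fun _ _ => by simp)).symm
    have h1 : (U.filter fun u => ¬ R u (τ u)).card = 2 * (Finset.univ.filter fun j =>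
        f j ≠ l j ∧ ¬ R (f j) (l j)).card := by
      convert hcount (fun u v => ¬ R u v) (fun u v h h' => h (hRsymm _ _ h')) using 3
      ext
      simp
    rw [← h1, h0, Finset.card_filter_add_card_filter_not, ← Fintype.sum_prod_type',
      Finset.card_eq_sum_card_fiberwise (f := Prod.fst) (t := Finset.univ)
        (fun _ _ => Finset.mem_coe.2 (Finset.mem_univ _))]
    refine Finset.sum_congr rfl fun p _ => ?_
    rw [outer, ← Fintype.card_coe, ← Nat.card_eq_fintype_card]
    refine Nat.card_congr ⟨fun u => ⟨u.1.2, ?_⟩, fun d => ⟨(p, d.1), ?_⟩, ?_, ?_⟩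
    · have h := Finset.mem_filter.1 u.2
      have e : u.1 = (p, u.1.2) := Prod.ext h.2 rfl
      exact (congrArg (· ∈ U) e).mp h.1
    · simpa using d.2
    · rintro ⟨⟨p', d⟩, hu⟩
      simp only [Finset.mem_filter] at hu
      obtain ⟨hu, rfl⟩ := hu
      rfl
    · rintro ⟨d, hd⟩
      rfl
  have hlocal : ∀ c, ∑ p, outer U (c, p) + 1 ≤ 2 * (∑ i, Fx i c) + A c := by
    intro c
    rcases hS c with ⟨hSc, p₀, hp₀⟩ | ⟨hne, hout', hlt⟩
    · let δ : P → ℕ := fun p => (Finset.univ.filter fun i => ¬ inner i (c, p)).card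
      have hF : Fintype.card P * k + ∑ p, δ p ≤ ∑ i, Fx i c := by
        have : ∀ i, Fintype.card P + (Finset.univ.filter fun p => ¬ inner i (c, p)).card
            ≤ Fx i c := by
          intro i
          rw [← Finset.card_univ, ← Finset.card_image_of_injective (f := fun p => ((c, p), false))
            Finset.univ (fun p q h => by simpa using h),
            ← Finset.card_image_of_injective (f := fun p => ((c, p), true))
            (Finset.univ.filter fun p => ¬ inner i (c, p)) (fun p q h => by simpa using h),
            ← Finset.card_union_of_disjoint]
          · refine Finset.card_le_card fun x hx => ?_
            simp only [Finset.mem_union, Finset.mem_image, Finset.mem_filter, Finset.mem_univ,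
              true_and] at hx ⊢
            rcases hx with ⟨p, rfl⟩ | ⟨p, hp, rfl⟩
            · simp [π, hSc]
            · simp [π, hSc, hp]
          · rw [Finset.disjoint_left]
            intro x hx hx'
            simp only [Finset.mem_image] at hx hx'
            obtain ⟨p, -, rfl⟩ := hx
            obtain ⟨q, -, hq⟩ := hx'
            simp at hq
        refine le_trans (le_of_eq ?_) (Finset.sum_le_sum fun i _ => this i)
        rw [Finset.sum_add_distrib]
        congr 1
        · simp [mul_comm]
        · simp only [δ, Finset.card_filter]
          exact Finset.sum_comm
      have hle : ∀ p, outer U (c, p) ≤ 2 * k + δ p := by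
        intro p
        have h1 : outer U (c, p) + (Finset.univ.filter fun i => inner i (c, p)).card
            ≤ Fintype.card D := by
          convert outer_add_inner_le f l hdisj U (fun u hu => (hU u).1 hu) (c, p) using 3
          ext
          simp [inner]
        have h2 : (Finset.univ.filter fun i => inner i (c, p)).card + δ p = k := by
          have := Finset.card_filter_add_card_filter_not (s := (Finset.univ : Finset (Fin k)))
            (fun i => inner i (c, p))
          simpa [δ] using this
        omega
      have hlt : ∑ p, outer U (c, p) < ∑ p, (2 * k + 2 * δ p) := by
        refine Finset.sum_lt_sum (fun p _ => (hle p).trans (by omega)) ⟨p₀, Finset.mem_univ _, ?_⟩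
        have := hle p₀
        omega
      rw [Finset.sum_add_distrib, ← Finset.mul_sum, Finset.sum_const, Finset.card_univ,
        smul_eq_mul, ← Finset.mul_sum] at hlt
      linarith
    · have hF : k * (Fintype.card P - (S c).card + 1) ≤ ∑ i, Fx i c := by
        have : ∀ i ∈ (Finset.univ : Finset (Fin k)),
            Fintype.card P - (S c).card + 1 ≤ Fx i c := by
          intro i _
          rw [← Finset.card_compl, ← Finset.card_insert_of_notMem (a := rep c)
            (by simpa using hrep c hne), ← Finset.card_image_of_injective
            (f := fun p => ((c, p), false)) _ (fun p q h => by simpa using h)]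
          refine Finset.card_le_card fun x hx => ?_
          simp only [Finset.mem_image, Finset.mem_insert, Finset.mem_compl, Finset.mem_filter,
            Finset.mem_univ, true_and] at hx ⊢
          obtain ⟨p, rfl | hp, rfl⟩ := hx
          · simp [π, hrep c hne]
          · simp [π, hp]
        simpa using Finset.card_nsmul_le_sum _ _ _ this
      have hA : A c = (U.filter fun u => u.1.1 = c ∧ u.1.2 ∈ S c ∧ (τ u).1.1 = c ∧
          (τ u).1.2 ∈ S c).card := by
        simp only [A, Finset.filter_filter, R]
        congr 1
        refine Finset.filter_congr fun u _ => ?_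
        constructor
        · rintro ⟨⟨h1, h2, h3⟩, rfl⟩
          exact ⟨rfl, h2, h1.symm, h3⟩
        · rintro ⟨rfl, h2, h1, h3⟩
          exact ⟨⟨h1.symm, h2, h3⟩, rfl⟩
      rw [← hA] at hlt
      simp only [hout', Finset.sum_const, Finset.card_univ, smul_eq_mul]
      obtain ⟨q, hq⟩ := Nat.exists_eq_add_of_le (Finset.card_le_univ (S c))
      obtain ⟨s, hs⟩ := Nat.exists_eq_add_of_lt (Finset.card_pos.2 hne)
      have e1 : Fintype.card P - (S c).card = q := by omega
      have e2 : (S c).card - 1 = s := by omega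
      have e3 : Fintype.card P = s + 1 + q := by omega
      rw [e1] at hF
      rw [e2] at hlt
      rw [e3]
      nlinarith
  have := Finset.sum_le_sum fun c (_ : c ∈ Finset.univ) => hlocal c
  rw [Finset.sum_add_distrib, Finset.sum_add_distrib, ← Finset.mul_sum] at this
  simp only [Finset.sum_const, Finset.card_univ, smul_eq_mul, mul_one] at this
  omega

end GoodCopy

/-! ### Pieces glued at a hub -/

section Framework

lemma exists_walk_of_reflTransGen {V E : Type} {ends : E → Sym2 V} {S : Finset E} {u v : V}
    (h : Relation.ReflTransGen (fun x y => ∃ e, e ∉ S ∧ ends e = s(x, y)) u v) :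
    ∃ p : Walk ends u v, ∀ e ∈ p.edges, e ∉ S := by
  induction h using Relation.ReflTransGen.head_induction_on with
  | refl => exact ⟨.nil _, by simp [Walk.edges]⟩
  | head h _ ih =>
    obtain ⟨e, heS, he⟩ := h
    obtain ⟨p, hp⟩ := ih
    exact ⟨.cons e he p, by simpa [Walk.edges] using ⟨heS, hp⟩⟩

/-- In a piece `g₀` whose hub slots are those with value `none`, the cluster `p` is linked to
the hub by a chain of clusters that uses no slot of `B`. -/
inductive ToHub {P D O : Type} (g₀ : P × D → Option O) (B : Finset (P × D)) : P → Prop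
  | hub {p : P} {d : D} (hd : (p, d) ∉ B) (hg : g₀ (p, d) = none) : ToHub g₀ B p
  | step {p p' : P} {d d' : D} (hd : (p, d) ∉ B) (hd' : (p', d') ∉ B)
      (hg : g₀ (p, d) = g₀ (p', d')) (h : ToHub g₀ B p') : ToHub g₀ B p

/-- The trace on a single piece `g₀` of `k` edge-disjoint connectors, in the tight case. The set
`U` consists of the slots used by paths running between different slots; every cluster has exactly
`2 * k` of them. The map `τ` sends a slot to the slot at the other end of its path; what it does on
hub slots is irrelevant. The last clause says that a set `S` of clusters contains both ends of
at most `k * (#S - 1)` of these paths, each of them being counted twice. -/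
def LocalPacking {P D O : Type} [Fintype D] (k : ℕ) (g₀ : P × D → Option O) : Prop :=
  ∃ (U : Finset (P × D)) (τ : P × D → P × D),
    (∀ u ∈ U, g₀ u ≠ none → τ u ∈ U ∧ τ u ≠ u ∧ τ (τ u) = u ∧ g₀ (τ u) = g₀ u) ∧
    (∀ p, outer U p = 2 * k) ∧
    ∀ S : Finset P, S.Nonempty →
      Nat.card {u // u ∈ U ∧ g₀ u ≠ none ∧ u.1 ∈ S ∧ (τ u).1 ∈ S} ≤ 2 * k * (S.card - 1)

/-- The slot map of the graph formed by disjoint copies, indexed by `C`, of the piece `g₀`, with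
the hubs of all the copies identified to a single node `none`. -/
def copies (C : Type) {P D O : Type} (g₀ : P × D → Option O) (s : (C × P) × D) :
    Option (C × O) :=
  (g₀ (s.1.2, s.2)).map fun o => (s.1.1, o)

open Classical in
/-- A set of fewer than `m` edges meets fewer than `m` slots up to the choice of the copy, so every
terminal remains linked to the hub. -/
lemma edgeConnectedIn_copies (C : Type) {P D O : Type} {g₀ : P × D → Option O} {m : ℕ}
    (h : ∀ B : Finset (P × D), B.card < m → ∀ p, ToHub g₀ B p) :
    EdgeConnectedIn (inc (copies C g₀)) (terms (C × P) D (Option (C × O))) m := by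
  intro S hS t₁ ht₁ t₂ ht₂
  let B : Finset (P × D) := S.image fun e => (e.1.1.2, e.1.2)
  have hB : B.card < m := Finset.card_image_le.trans_lt hS
  let r : Vert (C × P) D (Option (C × O)) → Vert (C × P) D (Option (C × O)) → Prop :=
    fun x y => ∃ e, e ∉ S ∧ inc (copies C g₀) e = s(x, y)
  have : Std.Symm r := ⟨by
    rintro x y ⟨e, he, h⟩
    exact ⟨e, he, h.trans Sym2.eq_swap⟩⟩
  have hr : ∀ {x y}, Relation.ReflTransGen r x y → Relation.ReflTransGen r y x :=
    fun h => Relation.ReflTransGen.stdSymm.symm _ _ h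
  have hS' : ∀ c p d x, (p, d) ∉ B → (((c, p), d), x) ∉ S := fun c p d x hd hx =>
    hd (Finset.mem_image.2 ⟨_, hx, rfl⟩)
  have hin : ∀ c p d b, (p, d) ∉ B → Relation.ReflTransGen r (.inl ((c, p), b))
      (.inr (.inr (copies C g₀ ((c, p), d)))) := by
    intro c p d b hd
    refine .head (b := .inr (.inl ((c, p), d))) ?_ (.single ?_)
    · exact ⟨(((c, p), d), some b), hS' _ _ _ _ hd, rfl⟩
    · exact ⟨(((c, p), d), none), hS' _ _ _ _ hd, rfl⟩
  have hub : ∀ c p b, Relation.ReflTransGen r (.inl ((c, p), b)) (.inr (.inr none)) := by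
    intro c p b
    induction h B hB p with
    | @hub p d hd hg =>
      have := hin c p d b hd
      rwa [copies, hg] at this
    | @step p p' d d' hd hd' hg _ ih =>
      have h1 := hin c p d b hd
      have h2 := hin c p' d' b hd'
      have e : copies C g₀ ((c, p), d) = copies C g₀ ((c, p'), d') := by
        simp only [copies, hg]
      rw [e] at h1
      exact h1.trans ((hr h2).trans ih)
  obtain ⟨⟨⟨c, p⟩, b⟩, rfl⟩ := ht₁
  obtain ⟨⟨⟨c', p'⟩, b'⟩, rfl⟩ := ht₂
  exact exists_walk_of_reflTransGen
    ((hub c p b).trans (hr (hub c' p' b')))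

/-- Edge-disjoint connectors, described by the end slots `f j`, `l j` of their paths and the
terminals `β j`, `β' j` reached from them. The paths `j` of all the connectors form one family, in
which no slot is used twice. -/
lemma exists_slots_of_connectors {P D O : Type} {k : ℕ} {g : P × D → O}
    {Q : Fin k → Set (Edge P D)} (hQ : ∀ i, IsConnector (inc g) (terms P D O) (Q i))
    (hdisj : Pairwise fun i j => Disjoint (Q i) (Q j)) :
    ∃ (m : Fin k → ℕ) (f l : (Σ i, Fin (m i)) → P × D) (β β' : (Σ i, Fin (m i)) → Bool),
      (∀ j, g (f j) = g (l j)) ∧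
      (∀ j j' s, (s = f j ∨ s = l j) → (s = f j' ∨ s = l j') → j = j') ∧
      ∀ i x y, Relation.ReflTransGen
        (fun x y => ∃ j,
          (((f ⟨i, j⟩).1, β ⟨i, j⟩) = x ∧ ((l ⟨i, j⟩).1, β' ⟨i, j⟩) = y) ∨
          (((f ⟨i, j⟩).1, β ⟨i, j⟩) = y ∧ ((l ⟨i, j⟩).1, β' ⟨i, j⟩) = x)) x y := by
  choose m a b p hp hpd hQe hc using hQ
  have hshape : ∀ j : Σ i, Fin (m i), _ := fun j => tpath_shape (p j.1 j.2) (hp j.1 j.2)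
  choose f l β β' ha hb hg hf hl using hshape
  refine ⟨m, f, l, β, β', hg, ?_, ?_⟩
  · rintro ⟨i, j⟩ ⟨i', j'⟩ s hs hs'
    have h1 : Occupies (p i j).edges s := by
      rcases hs with rfl | rfl
      exacts [hf ⟨i, j⟩, hl ⟨i, j⟩]
    have h2 : Occupies (p i' j').edges s := by
      rcases hs' with rfl | rfl
      exacts [hf ⟨i', j'⟩, hl ⟨i', j'⟩]
    obtain ⟨e, he, he'⟩ := h1.common h2
    by_cases hi : i = i'
    · subst hi
      by_cases hj : j = j'
      · rw [hj]
      · exact absurd he' (hpd i j j' hj e he)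
    · refine absurd (hdisj hi) (Set.not_disjoint_iff.2 ⟨e, ?_, ?_⟩)
      · rw [hQe]
        exact ⟨j, he⟩
      · rw [hQe]
        exact ⟨j', he'⟩
  · intro i x y
    have h := hc i (.inl x) ⟨x, rfl⟩ (.inl y) ⟨y, rfl⟩
    let ρ : Vert P D O → P × Bool := Sum.elim id fun _ => x
    refine Relation.ReflTransGen.lift ρ ?_ _ _ h
    rintro u v ⟨j, ⟨rfl, rfl⟩ | ⟨rfl, rfl⟩⟩
    · exact ⟨j, Or.inl ⟨by rw [ha ⟨i, j⟩]; rfl, by rw [hb ⟨i, j⟩]; rfl⟩⟩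
    · exact ⟨j, Or.inr ⟨by rw [ha ⟨i, j⟩]; rfl, by rw [hb ⟨i, j⟩]; rfl⟩⟩

open Classical in
/-- Edge-disjoint connectors in the union of more than `2 * k` copies of a piece leave the trace
`LocalPacking k g₀` on the copy provided by `exists_good_copy`. -/
lemma localPacking_of_connectors {C P D O : Type} [Fintype C] [Fintype P] [Fintype D] {k : ℕ}
    {g₀ : P × D → Option O} (hD : Fintype.card D = 3 * k) (hC : 2 * k < Fintype.card C)
    {Q : Fin k → Set (Edge (C × P) D)}
    (hQ : ∀ i, IsConnector (inc (copies C g₀)) (terms (C × P) D (Option (C × O))) (Q i))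
    (hdisj : Pairwise fun i j => Disjoint (Q i) (Q j)) : LocalPacking k g₀ := by
  obtain ⟨m, f, l, β, β', hg, hfl, hconn⟩ := exists_slots_of_connectors hQ hdisj
  obtain ⟨U, τ, c, hτ, hout, hS⟩ := exists_good_copy (copies C g₀) hD hC f l β β' hg hfl hconn
  let ψ : P × D → (C × P) × D := fun u => ((c, u.1), u.2)
  have hψ : Function.Injective ψ := fun u v h => by
    simp only [ψ, Prod.mk.injEq] at h
    exact Prod.ext h.1.2 h.2
  -- mates at nodes other than the hub stay in the same copy
  have key : ∀ u, ψ u ∈ U → g₀ u ≠ none →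
      ∃ v, τ (ψ u) = ψ v ∧ g₀ v = g₀ u := by
    intro u hu hne
    obtain ⟨-, -, -, h⟩ := hτ _ hu
    obtain ⟨o, ho⟩ := Option.ne_none_iff_exists'.1 hne
    generalize τ (ψ u) = w at h
    obtain ⟨⟨c', p'⟩, d'⟩ := w
    simp only [copies, ψ, ho, Option.map_some, Option.map_eq_some_iff, Prod.mk.injEq] at h
    obtain ⟨o', h1, rfl, rfl⟩ := h
    exact ⟨(p', d'), rfl, h1.trans ho.symm⟩
  refine ⟨Finset.univ.filter fun u => ψ u ∈ U, fun u => ((τ (ψ u)).1.2, (τ (ψ u)).2), ?_, ?_, ?_⟩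
  · intro u hu hne
    simp only [Finset.mem_filter, Finset.mem_univ, true_and] at hu ⊢
    obtain ⟨v, hv, hgv⟩ := key u hu hne
    obtain ⟨h1, h2, h3, -⟩ := hτ _ hu
    rw [hv] at h1 h2 h3 ⊢
    refine ⟨h1, fun h => h2 (congrArg ψ h), ?_, hgv⟩
    change ((τ (ψ v)).1.2, (τ (ψ v)).2) = u
    rw [h3]
  · intro p
    rw [← hout p]
    simp [outer, ψ]
  · intro S hne
    refine le_trans ?_ (hS S hne)
    rw [Nat.card_eq_fintype_card, Fintype.card_subtype]
    refine Finset.card_le_card_of_injOn ψ (fun u hu => ?_) hψ.injOn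
    simp only [Finset.coe_filter, Finset.mem_filter, Finset.mem_univ, true_and,
      Set.mem_ofPred_eq] at hu ⊢
    obtain ⟨hu, hne, h1, h2⟩ := hu
    obtain ⟨v, hv, -⟩ := key u hu hne
    exact ⟨hu, rfl, h1, by rw [hv], h2⟩

/-- A piece whose clusters have `3 * k` slots and cannot be cut off from the hub by fewer than `3 * k`
slots, but which carries no local packing, provides arbitrarily large graphs with terminals that are
`3 * k`-edge-connected and lack `k` edge-disjoint connectors. -/
theorem counterexample_of_piece {P D O : Type} [Fintype P] [Fintype D] [Fintype O] [Nonempty P]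
    {k : ℕ} {g₀ : P × D → Option O} (hD : Fintype.card D = 3 * k)
    (hhub : ∀ B : Finset (P × D), B.card < 3 * k → ∀ p, ToHub g₀ B p)
    (hpack : ¬ LocalPacking k g₀) (n : ℕ) :
    ∃ (V E : Type) (_ : Fintype V) (_ : Fintype E) (ends : E → Sym2 V) (T : Set V),
      n ≤ Nat.card V ∧ EdgeConnectedIn ends T (3 * k) ∧
      ¬ ∃ Q : Fin k → Set E, (∀ i, IsConnector ends T (Q i)) ∧
          Pairwise fun i j => Disjoint (Q i) (Q j) := by
  let C := Fin (max (2 * k + 1) n)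
  refine ⟨Vert (C × P) D (Option (C × O)), Edge (C × P) D, inferInstance, inferInstance,
    inc (copies C g₀), terms _ _ _, ?_, edgeConnectedIn_copies C hhub, ?_⟩
  · have hinj : Function.Injective
        (fun c : C => (.inl ((c, Classical.arbitrary P), false) :
          Vert (C × P) D (Option (C × O)))) := fun c c' h => by simpa using h
    have := Nat.card_le_card_of_injective _ hinj
    simp only [C, Nat.card_fin] at this
    exact (le_max_right _ _).trans this
  · rintro ⟨Q, hQ, hdisj⟩
    refine hpack (localPacking_of_connectors hD ?_ hQ hdisj)
    simp only [C, Fintype.card_fin]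
    omega

end Framework

/-! ### Used edges at nodes with two slots -/

section Mates

lemma even_card_of_mate {X : Type} (W : Finset X) (τ : X → X)
    (hτ : ∀ u ∈ W, τ u ∈ W ∧ τ u ≠ u ∧ τ (τ u) = u) : Even W.card := by
  have h : ∑ _u ∈ W, (1 : ZMod 2) = 0 := by
    refine Finset.sum_involution (fun u _ => τ u) (fun _ _ => by decide) (fun u hu _ => (hτ u hu).2.1)
      (fun u hu => (hτ u hu).1) (fun u hu => (hτ u hu).2.2)
  rw [Finset.sum_const, nsmul_eq_mul, mul_one] at h
  exact (ZMod.natCast_eq_zero_iff_even).1 h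

/-- At a node with only two slots, a path using one of them uses the other one too. -/
lemma mate_eq {P D O : Type} {g₀ : P × D → Option O} {U : Finset (P × D)} {τ : P × D → P × D}
    (hτ : ∀ u ∈ U, g₀ u ≠ none → τ u ∈ U ∧ τ u ≠ u ∧ τ (τ u) = u ∧ g₀ (τ u) = g₀ u)
    {u v : P × D} (hu : u ∈ U) (hne : g₀ u ≠ none)
    (huv : ∀ w, g₀ w = g₀ u → w = u ∨ w = v) : τ u = v ∧ v ∈ U := by
  obtain ⟨h1, h2, -, h4⟩ := hτ u hu hne
  have := (huv _ h4).resolve_left h2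
  exact ⟨this, this ▸ h1⟩

/-- A family of edges inside the set `S` of clusters, the `i`-th of them joining the slots `x i` and
`y i`, contains at most `k * (#S - 1)` edges that are used. -/
lemma card_used_le {P D O ι : Type} [Finite D] [Fintype P] [Finite ι] {k : ℕ}
    {g₀ : P × D → Option O} {U : Finset (P × D)} {τ : P × D → P × D}
    (hS : ∀ S : Finset P, S.Nonempty →
      Nat.card {u // u ∈ U ∧ g₀ u ≠ none ∧ u.1 ∈ S ∧ (τ u).1 ∈ S} ≤ 2 * k * (S.card - 1))
    (S : Finset P) (hne : S.Nonempty) (x y : ι → P × D)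
    (hx : Function.Injective x) (hy : Function.Injective y) (hxy : ∀ i j, x i ≠ y j)
    (hxS : ∀ i, (x i).1 ∈ S) (hyS : ∀ i, (y i).1 ∈ S)
    (hgx : ∀ i, g₀ (x i) ≠ none) (hgy : ∀ i, g₀ (y i) ≠ none)
    (hU : ∀ i, x i ∈ U → τ (x i) = y i ∧ y i ∈ U)
    (hU' : ∀ i, y i ∈ U → τ (y i) = x i ∧ x i ∈ U) :
    Nat.card {i // x i ∈ U} ≤ k * (S.card - 1) := by
  have h := hS S hne
  let F : Bool × {i // x i ∈ U} →
      {u // u ∈ U ∧ g₀ u ≠ none ∧ u.1 ∈ S ∧ (τ u).1 ∈ S} :=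
    fun z => if z.1 then ⟨x z.2, z.2.2, hgx _, hxS _, by rw [(hU _ z.2.2).1]; exact hyS _⟩
      else ⟨y z.2, (hU _ z.2.2).2, hgy _, hyS _, by
        rw [(hU' _ (hU _ z.2.2).2).1]
        exact hxS _⟩
  have hF : Function.Injective F := by
    rintro ⟨_ | _, i⟩ ⟨_ | _, j⟩ hij <;> simp only [F, Bool.false_eq_true, if_true, if_false,
      Subtype.mk.injEq] at hij
    · exact Prod.ext rfl (Subtype.ext (hy hij))
    · exact absurd hij.symm (hxy _ _)
    · exact absurd hij (hxy _ _)
    · exact Prod.ext rfl (Subtype.ext (hx hij))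
  have := Nat.card_le_card_of_injective F hF
  simp only [Nat.card_prod, Nat.card_eq_fintype_card (α := Bool), Fintype.card_bool] at this
  rw [mul_assoc] at h
  omega

end Mates

/-! ### The even piece and its connectivity -/

section EvenPiece

/-- The slots of a cluster of the even piece: a left and a right bundle of `h` slots each. -/
abbrev ESlot (h : ℕ) : Type := Bool × Fin h

/-- The clusters of the even piece: one centre `none`, and for every slot `s` of the centre two
arms `(s, b)`, each of them a chain of three clusters `(s, b, 0)`, `(s, b, 1)`, `(s, b, 2)`. -/
abbrev EClus (h : ℕ) : Type := Option (ESlot h × Bool × Fin 3)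

/-- The nodes of the even piece other than the hub: one node for every slot `s` of the centre, and
one node for every pair of matched slots of consecutive clusters of an arm. -/
abbrev ENode (h : ℕ) : Type := ESlot h ⊕ (ESlot h × Bool × Bool × Fin h)

/-- The even piece. The slot `s` of the centre shares its node with the left bundles of
`(s, false, 0)` and `(s, true, 0)`; consecutive clusters of an arm are joined by the `h` edges
matching a right bundle to the next left bundle; the right bundle of the last cluster of an arm is
attached to the hub. -/
def evenPiece (h : ℕ) : EClus h × ESlot h → Option (ENode h)
  | (none, s) => some (.inl s)
  | (some (s, _, 0), (false, _)) => some (.inl s)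
  | (some (s, b, 0), (true, r)) => some (.inr (s, b, false, r))
  | (some (s, b, 1), (false, r)) => some (.inr (s, b, false, r))
  | (some (s, b, 1), (true, r)) => some (.inr (s, b, true, r))
  | (some (s, b, 2), (false, r)) => some (.inr (s, b, true, r))
  | (some (_, _, 2), (true, _)) => none

variable {h : ℕ}

/-- The bundle containing a slot of an arm, with the position of the slot in it: `(s, none)` is the
bundle between the two arms at `s`, while `(s, some (b, i))` is the bundle leaving the cluster
`(s, b, i)` in the direction of the hub. Slots of the centre belong to no bundle. -/
def bundle : EClus h × ESlot h → Option ((ESlot h × Option (Bool × Fin 3)) × Fin h)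
  | (none, _) => none
  | (some (s, _, 0), (false, r)) => some ((s, none), r)
  | (some (s, b, 0), (true, r)) => some ((s, some (b, 0)), r)
  | (some (s, b, 1), (false, r)) => some ((s, some (b, 0)), r)
  | (some (s, b, 1), (true, r)) => some ((s, some (b, 1)), r)
  | (some (s, b, 2), (false, r)) => some ((s, some (b, 1)), r)
  | (some (s, b, 2), (true, r)) => some ((s, some (b, 2)), r)

/-- A bundle is blocked by `B` if every one of its positions contains a slot of `B`. -/
def Blocked (B : Finset (EClus h × ESlot h)) (κ : ESlot h × Option (Bool × Fin 3)) : Prop :=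
  ∀ r, ∃ u ∈ B, bundle u = some (κ, r)

/-- Bundles have `h` positions and no slot is in two of them, so fewer than `2 * h` slots block at most
one bundle. -/
lemma eq_of_blocked {B : Finset (EClus h × ESlot h)} (hB : B.card < 2 * h)
    {κ κ' : ESlot h × Option (Bool × Fin 3)} (hκ : Blocked B κ) (hκ' : Blocked B κ') :
    κ = κ' := by
  by_contra hne
  choose u hu hub using hκ
  choose u' hu' hub' using hκ'
  refine absurd (Finset.card_le_card_of_injOn (s := Finset.univ) (t := B)
    (fun x : Bool × Fin h => if x.1 then u x.2 else u' x.2) ?_ ?_) ?_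
  · rintro ⟨_ | _, r⟩ _
    exacts [hu' r, hu r]
  · rintro ⟨x, r⟩ _ ⟨y, t⟩ _ hxy
    have := congrArg bundle hxy
    cases x <;> cases y <;>
      simp only [Bool.false_eq_true, if_true, if_false, hub, hub', Option.some.injEq,
        Prod.mk.injEq] at this ⊢
    exacts [⟨trivial, this.2⟩, absurd this.1.symm hne, absurd this.1 hne, ⟨trivial, this.2⟩]
  · simpa using hB

lemma exists_of_not_blocked {B : Finset (EClus h × ESlot h)}
    {κ : ESlot h × Option (Bool × Fin 3)} (hκ : ¬ Blocked B κ) :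
    ∃ r, ∀ u, bundle u = some (κ, r) → u ∉ B := by
  simpa [Blocked, not_forall, imp_not_comm] using hκ

section ToHub

variable {B : Finset (EClus h × ESlot h)} {s : ESlot h} {b : Bool}

lemma toHub_two (h2 : ¬ Blocked B (s, some (b, 2))) :
    ToHub (evenPiece h) B (some (s, b, 2)) := by
  obtain ⟨r, hr⟩ := exists_of_not_blocked h2
  exact .hub (hr (some (s, b, 2), (true, r)) rfl) rfl

lemma toHub_one_iff_two (h1 : ¬ Blocked B (s, some (b, 1))) :
    ToHub (evenPiece h) B (some (s, b, 1)) ↔ ToHub (evenPiece h) B (some (s, b, 2)) := by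
  obtain ⟨r, hr⟩ := exists_of_not_blocked h1
  have e1 := hr (some (s, b, 1), (true, r)) rfl
  have e2 := hr (some (s, b, 2), (false, r)) rfl
  exact ⟨.step e2 e1 rfl, .step e1 e2 rfl⟩

lemma toHub_zero_iff_one (h0 : ¬ Blocked B (s, some (b, 0))) :
    ToHub (evenPiece h) B (some (s, b, 0)) ↔ ToHub (evenPiece h) B (some (s, b, 1)) := by
  obtain ⟨r, hr⟩ := exists_of_not_blocked h0
  have e1 := hr (some (s, b, 0), (true, r)) rfl
  have e2 := hr (some (s, b, 1), (false, r)) rfl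
  exact ⟨.step e2 e1 rfl, .step e1 e2 rfl⟩

/-- The first clusters of the two arms at `s` are linked to each other through the node of `s`. -/
lemma toHub_zero_of_not (ha : ¬ Blocked B (s, none))
    (hb : ToHub (evenPiece h) B (some (s, !b, 0))) :
    ToHub (evenPiece h) B (some (s, b, 0)) := by
  obtain ⟨r, hr⟩ := exists_of_not_blocked ha
  exact .step (hr (some (s, b, 0), (false, r)) rfl) (hr (some (s, !b, 0), (false, r)) rfl) rfl hb

lemma toHub_arm (hB : B.card < 2 * h) (i : Fin 3) :
    ToHub (evenPiece h) B (some (s, b, i)) := by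
  -- at most one bundle is blocked; if it lies on this arm, the other arm is intact
  have hother : ∀ j, Blocked B (s, some (b, j)) → ToHub (evenPiece h) B (some (s, b, 0)) := by
    intro j hj
    have hn : ∀ κ, κ ≠ (s, some (b, j)) → ¬ Blocked B κ := fun κ hκ h => hκ (eq_of_blocked hB h hj)
    have hn' : ∀ i, ¬ Blocked B (s, some (!b, i)) := fun i => hn _ (by simp)
    exact toHub_zero_of_not (hn _ (by simp)) ((toHub_zero_iff_one (hn' 0)).2
      ((toHub_one_iff_two (hn' 1)).2 (toHub_two (hn' 2))))
  have key : ToHub (evenPiece h) B (some (s, b, 0)) ∧ ToHub (evenPiece h) B (some (s, b, 1)) ∧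
      ToHub (evenPiece h) B (some (s, b, 2)) := by
    have hn : ∀ j i, Blocked B (s, some (b, j)) → j ≠ i → ¬ Blocked B (s, some (b, i)) := by
      intro j i hj hij hi
      simpa [hij] using eq_of_blocked hB hj hi
    by_cases h0 : Blocked B (s, some (b, 0))
    · have t2 := toHub_two (hn 0 2 h0 (by decide))
      exact ⟨hother 0 h0, (toHub_one_iff_two (hn 0 1 h0 (by decide))).2 t2, t2⟩
    have e0 := toHub_zero_iff_one h0
    by_cases h2 : Blocked B (s, some (b, 2))
    · have t1 := e0.1 (hother 2 h2)
      exact ⟨hother 2 h2, t1, (toHub_one_iff_two (hn 2 1 h2 (by decide))).1 t1⟩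
    have t2 := toHub_two h2
    by_cases h1 : Blocked B (s, some (b, 1))
    · exact ⟨hother 1 h1, e0.1 (hother 1 h1), t2⟩
    · have t1 := (toHub_one_iff_two h1).2 t2
      exact ⟨e0.2 t1, t1, t2⟩
  fin_cases i
  exacts [key.1, key.2.1, key.2.2]

/-- Fewer than `2 * h` slots do not cut off any cluster of the even piece from the hub. -/
lemma toHub_even (hB : B.card < 2 * h) (p : EClus h) : ToHub (evenPiece h) B p := by
  obtain _ | ⟨s, b, i⟩ := p
  · have hpos : 0 < h := by omega
    -- some slot of the centre and some slot next to it avoid `B`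
    by_contra hno
    have hd : ∀ d : ESlot h, ∃ u ∈ B,
        u = (none, d) ∨ u = (some (d, false, 0), (false, ⟨0, hpos⟩)) := by
      intro d
      by_contra! hd
      exact hno (.step (fun h => (hd _ h).1 rfl) (fun h => (hd _ h).2 rfl) rfl
        (toHub_arm (s := d) (b := false) hB 0))
    choose u hu hud using hd
    refine absurd (Finset.card_le_card_of_injOn (s := Finset.univ) (t := B) u
      (fun d _ => hu d) ?_) ?_
    · intro d _ d' _ hdd
      have h1 := hud d
      have h2 := hud d'
      rw [hdd] at h1
      rcases h1 with h1 | h1 <;> rcases h2 with h2 | h2 <;>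
        (rw [h1] at h2; simp at h2; try exact h2)
    · simpa using hB
  · exact toHub_arm hB i

end ToHub

end EvenPiece

/-! ### No local packing in the even piece -/

section EvenPacking

variable {h : ℕ}

lemma outer_eq_add (U : Finset (EClus h × ESlot h)) (p : EClus h) :
    outer U p = Nat.card {r : Fin h // (p, (false, r)) ∈ U} +
      Nat.card {r : Fin h // (p, (true, r)) ∈ U} := by
  rw [outer, ← Nat.card_sum]
  refine (Nat.card_congr (Equiv.ofBijective (Sum.elim (fun r => ⟨(false, r.1), r.2⟩)
    (fun r => ⟨(true, r.1), r.2⟩)) ⟨?_, ?_⟩)).symm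
  · rintro (⟨r, hr⟩ | ⟨r, hr⟩) (⟨t, ht⟩ | ⟨t, ht⟩) hrt <;> simp at hrt <;> simp [hrt]
  · rintro ⟨⟨_ | _, r⟩, hr⟩
    exacts [⟨.inl ⟨r, hr⟩, rfl⟩, ⟨.inr ⟨r, hr⟩, rfl⟩]

lemma evenPiece_eq_inl {s : ESlot h} : ∀ w, evenPiece h w = some (.inl s) →
    w = (none, s) ∨ ∃ b r, w = (some (s, b, 0), (false, r))
  | (none, _), hw => by cases hw; exact Or.inl rfl
  | (some (_, b, 0), (false, r)), hw => by cases hw; exact Or.inr ⟨b, r, rfl⟩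
  | (some (_, _, 0), (true, _)), hw => by cases hw
  | (some (_, _, 1), (false, _)), hw => by cases hw
  | (some (_, _, 1), (true, _)), hw => by cases hw
  | (some (_, _, 2), (false, _)), hw => by cases hw
  | (some (_, _, 2), (true, _)), hw => by cases hw

lemma evenPiece_eq_inr_false {s : ESlot h} {b : Bool} {r : Fin h} :
    ∀ w, evenPiece h w = some (.inr (s, b, false, r)) →
      w = (some (s, b, 0), (true, r)) ∨ w = (some (s, b, 1), (false, r))
  | (none, _), hw => by cases hw
  | (some (_, _, 0), (false, _)), hw => by cases hw
  | (some (_, _, 0), (true, _)), hw => by cases hw; exact Or.inl rfl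
  | (some (_, _, 1), (false, _)), hw => by cases hw; exact Or.inr rfl
  | (some (_, _, 1), (true, _)), hw => by cases hw
  | (some (_, _, 2), (false, _)), hw => by cases hw
  | (some (_, _, 2), (true, _)), hw => by cases hw

lemma evenPiece_eq_inr_true {s : ESlot h} {b : Bool} {r : Fin h} :
    ∀ w, evenPiece h w = some (.inr (s, b, true, r)) →
      w = (some (s, b, 1), (true, r)) ∨ w = (some (s, b, 2), (false, r))
  | (none, _), hw => by cases hw
  | (some (_, _, 0), (false, _)), hw => by cases hw
  | (some (_, _, 0), (true, _)), hw => by cases hw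
  | (some (_, _, 1), (false, _)), hw => by cases hw
  | (some (_, _, 1), (true, _)), hw => by cases hw; exact Or.inl rfl
  | (some (_, _, 2), (false, _)), hw => by cases hw; exact Or.inr rfl
  | (some (_, _, 2), (true, _)), hw => by cases hw

/-- On an arm, at most `k` edges of each of the two inner bundles are used, and every cluster has
`2 * k` used slots; so the leftmost bundle has exactly `k` used slots. At the node of a slot `s` of
the centre the two arms therefore use `2 * k` slots, and `s` itself is not used since the number of
used slots at a node is even. So no slot of the centre is used, although there should be
`2 * k`. -/
lemma not_localPacking_even {k : ℕ} (hk : 0 < k) : ¬ LocalPacking k (evenPiece h) := by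
  rintro ⟨U, τ, hτ, hout, hS⟩
  let L : ESlot h → Bool → Fin 3 → ℕ := fun s b i =>
    Nat.card {r : Fin h // (some (s, b, i), (false, r)) ∈ U}
  -- the two bundles inside an arm
  have m01 : ∀ s b r, (some (s, b, 0), (true, r)) ∈ U →
      τ (some (s, b, 0), (true, r)) = (some (s, b, 1), (false, r)) ∧
        (some (s, b, 1), (false, r)) ∈ U := fun s b r hu =>
    mate_eq hτ hu (Option.some_ne_none _) fun w hw => evenPiece_eq_inr_false w hw
  have m10 : ∀ s b r, (some (s, b, 1), (false, r)) ∈ U →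
      τ (some (s, b, 1), (false, r)) = (some (s, b, 0), (true, r)) ∧
        (some (s, b, 0), (true, r)) ∈ U := fun s b r hu =>
    mate_eq hτ hu (Option.some_ne_none _) fun w hw => (evenPiece_eq_inr_false w hw).symm
  have m12 : ∀ s b r, (some (s, b, 1), (true, r)) ∈ U →
      τ (some (s, b, 1), (true, r)) = (some (s, b, 2), (false, r)) ∧
        (some (s, b, 2), (false, r)) ∈ U := fun s b r hu =>
    mate_eq hτ hu (Option.some_ne_none _) fun w hw => evenPiece_eq_inr_true w hw
  have m21 : ∀ s b r, (some (s, b, 2), (false, r)) ∈ U →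
      τ (some (s, b, 2), (false, r)) = (some (s, b, 1), (true, r)) ∧
        (some (s, b, 1), (true, r)) ∈ U := fun s b r hu =>
    mate_eq hτ hu (Option.some_ne_none _) fun w hw => (evenPiece_eq_inr_true w hw).symm
  have hused : ∀ (p q : EClus h) (c c' : Bool), p ≠ q →
      (∀ r, evenPiece h (p, (c, r)) ≠ none) → (∀ r, evenPiece h (q, (c', r)) ≠ none) →
      (∀ r, (p, (c, r)) ∈ U → τ (p, (c, r)) = (q, (c', r)) ∧ (q, (c', r)) ∈ U) →
      (∀ r, (q, (c', r)) ∈ U → τ (q, (c', r)) = (p, (c, r)) ∧ (p, (c, r)) ∈ U) →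
      Nat.card {r : Fin h // (p, (c, r)) ∈ U} ≤ k := by
    classical
    intro p q c c' hpq hp hq h h'
    have := card_used_le hS {p, q} ⟨p, by simp⟩ (fun r => (p, (c, r))) (fun r => (q, (c', r)))
      (fun r r' e => by simpa using e) (fun r r' e => by simpa using e)
      (fun r r' e => hpq (congrArg Prod.fst e)) (by simp) (by simp) hp hq h h'
    simpa [Finset.card_pair hpq] using this
  -- every arm uses exactly `k` slots of its leftmost bundle
  have hL : ∀ s b, L s b 0 = k := by
    intro s b
    have u01 : Nat.card {r : Fin h // (some (s, b, 0), (true, r)) ∈ U} ≤ k :=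
      hused _ _ _ _ (by simp) (fun _ => by exact Option.some_ne_none _)
        (fun _ => by exact Option.some_ne_none _) (m01 s b) (m10 s b)
    have u12 : Nat.card {r : Fin h // (some (s, b, 1), (true, r)) ∈ U} ≤ k :=
      hused _ _ _ _ (by simp) (fun _ => by exact Option.some_ne_none _)
        (fun _ => by exact Option.some_ne_none _) (m12 s b) (m21 s b)
    have e01 : L s b 1 = Nat.card {r : Fin h // (some (s, b, 0), (true, r)) ∈ U} :=
      Nat.card_congr (Equiv.subtypeEquivRight fun r =>
        ⟨fun h => (m10 s b r h).2, fun h => (m01 s b r h).2⟩)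
    have o0 := (outer_eq_add U _).symm.trans (hout (some (s, b, 0)))
    have o1 := (outer_eq_add U _).symm.trans (hout (some (s, b, 1)))
    simp only [L] at e01 ⊢
    omega
  -- the centre cannot use any of its slots, by parity at the node of that slot
  have hcentre : ∀ s, (none, s) ∉ U := by
    intro s hs
    classical
    have heven := even_card_of_mate (U.filter fun u => evenPiece h u = some (.inl s)) τ (by
      intro u hu
      simp only [Finset.mem_filter] at hu ⊢
      obtain ⟨h1, h2, h3, h4⟩ := hτ u hu.1 (by simp [hu.2])
      exact ⟨⟨h1, h4.trans hu.2⟩, h2, h3⟩)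
    have hcard : (U.filter fun u => evenPiece h u = some (.inl s)).card = 2 * k + 1 := by
      let F : Option ({r : Fin h // (some (s, false, 0), (false, r)) ∈ U} ⊕
          {r : Fin h // (some (s, true, 0), (false, r)) ∈ U}) →
          {u // u ∈ U.filter fun u => evenPiece h u = some (.inl s)}
        | none => ⟨(none, s), Finset.mem_filter.2 ⟨hs, rfl⟩⟩
        | some (.inl r) => ⟨(some (s, false, 0), (false, r.1)), Finset.mem_filter.2 ⟨r.2, rfl⟩⟩
        | some (.inr r) => ⟨(some (s, true, 0), (false, r.1)), Finset.mem_filter.2 ⟨r.2, rfl⟩⟩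
      have hF : Function.Bijective F := by
        constructor
        · rintro (_ | ⟨r, hr⟩ | ⟨r, hr⟩) (_ | ⟨t, ht⟩ | ⟨t, ht⟩) hrt <;> simp [F] at hrt <;>
            simp [hrt]
        · rintro ⟨u, hu⟩
          obtain ⟨hu, hg⟩ := Finset.mem_filter.1 hu
          obtain rfl | ⟨_ | _, r, rfl⟩ := evenPiece_eq_inl u hg
          exacts [⟨none, rfl⟩, ⟨some (.inl ⟨r, hu⟩), rfl⟩, ⟨some (.inr ⟨r, hu⟩), rfl⟩]
      have h0 := hL s false
      have h1 := hL s true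
      rw [← Fintype.card_coe, ← Nat.card_eq_fintype_card]
      have := Nat.card_congr (Equiv.ofBijective F hF)
      rw [Finite.card_option, Nat.card_sum] at this
      simp only [L] at h0 h1
      omega
    rw [hcard] at heven
    exact absurd heven (by simp)
  have := hout none
  rw [outer, Nat.card_eq_zero.2 (Or.inl ⟨fun d => hcentre _ d.2⟩)] at this
  omega

end EvenPacking

/-! ### The Petersen piece -/

section Petersen

/-- The clusters of the Petersen piece: the three neighbours `inl i` of the hub, and the
hexagon formed by the vertices `inr j` at distance two from the hub. -/
abbrev PClus : Type := Fin 3 ⊕ Fin 6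

/-- The Petersen graph with one vertex, the hub, singled out. The node `inl j` subdivides the edge
from the hexagon vertex `j` to the neighbour `j % 3` of the hub, and `inr j` subdivides the edge
from `j` to `j + 1` of the hexagon. -/
def petersenPiece : PClus × Fin 3 → Option (Fin 6 ⊕ Fin 6)
  | (.inl _, 0) => none
  | (.inl i, 1) => some (.inl (Fin.castAdd 3 i))
  | (.inl i, 2) => some (.inl (Fin.natAdd 3 i))
  | (.inr j, 0) => some (.inl j)
  | (.inr j, 1) => some (.inr j)
  | (.inr j, 2) => some (.inr (j - 1))

/-- The first of the two slots at a node of the Petersen piece. -/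
def fstSlot : Fin 6 ⊕ Fin 6 → PClus × Fin 3
  | .inl j => (.inr j, 0)
  | .inr j => (.inr j, 1)

/-- The index of the neighbour of the hub adjacent to the hexagon vertex `j`. -/
def centre (j : Fin 6) : Fin 3 := ⟨j.1 % 3, Nat.mod_lt _ (by decide)⟩

/-- The second of the two slots at a node of the Petersen piece. -/
def sndSlot : Fin 6 ⊕ Fin 6 → PClus × Fin 3
  | .inl j => (.inl (centre j), if j.1 < 3 then 1 else 2)
  | .inr j => (.inr (j + 1), 2)

/-- A chain of slots witnessing that `p` is linked to the hub: the first slot belongs to `p`, it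
shares its node with the second slot, and so on until a hub slot is reached. -/
def IsRoute : PClus → List (PClus × Fin 3) → Bool
  | _, [] => false
  | p, [u] => u.1 = p && petersenPiece u = none
  | p, u :: v :: l => u.1 = p && petersenPiece u = petersenPiece v && IsRoute v.1 l

lemma toHub_of_isRoute {B : Finset (PClus × Fin 3)} :
    ∀ (l : List (PClus × Fin 3)) (p : PClus), IsRoute p l → (∀ u ∈ l, u ∉ B) →
      ToHub petersenPiece B p
  | [], _, h, _ => by simp [IsRoute] at h
  | [(p', d)], p, h, hl => by
    simp only [IsRoute, Bool.and_eq_true, decide_eq_true_eq] at h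
    obtain ⟨rfl, h⟩ := h
    exact .hub (hl _ (by simp)) h
  | (p', d) :: (q, d') :: l, p, h, hl => by
    simp only [IsRoute, Bool.and_eq_true, decide_eq_true_eq] at h
    obtain ⟨⟨rfl, h⟩, h'⟩ := h
    exact .step (hl _ (by simp)) (hl _ (by simp)) h
      (toHub_of_isRoute l q h' fun u hu => hl u (by simp [hu]))

/-- The slots of the path from the hexagon vertex `j` to the hub through its neighbour. -/
def direct (j : Fin 6) : List (PClus × Fin 3) :=
  [fstSlot (.inl j), sndSlot (.inl j), (.inl (centre j), 0)]

/-- Three routes from a cluster to the hub without common slots, following three internally disjoint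
paths of the Petersen graph. -/
def routes : PClus → Fin 3 → List (PClus × Fin 3)
  | .inr j, 0 => direct j
  | .inr j, 1 => (.inr j, 1) :: (.inr (j + 1), 2) :: direct (j + 1)
  | .inr j, 2 => (.inr j, 2) :: (.inr (j - 1), 1) :: direct (j - 1)
  | .inl i, 0 => [(.inl i, 0)]
  | .inl i, 1 => (.inl i, 1) :: (.inr (Fin.castAdd 3 i), 0) :: (.inr (Fin.castAdd 3 i), 1) ::
      (.inr (Fin.castAdd 3 i + 1), 2) :: direct (Fin.castAdd 3 i + 1)
  | .inl i, 2 => (.inl i, 2) :: (.inr (Fin.natAdd 3 i), 0) :: (.inr (Fin.natAdd 3 i), 2) ::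
      (.inr (Fin.natAdd 3 i - 1), 1) :: direct (Fin.natAdd 3 i - 1)

lemma toHub_petersen {B : Finset (PClus × Fin 3)} (hB : B.card < 3) (p : PClus) :
    ToHub petersenPiece B p := by
  have hroute : ∀ p x, IsRoute p (routes p x) := by decide
  have hdisj : ∀ p x y, x ≠ y → ∀ u ∈ routes p x, ∀ v ∈ routes p y, u ≠ v := by decide
  by_contra hno
  have hmeet : ∀ x, ∃ u ∈ routes p x, u ∈ B := by
    intro x
    by_contra! hx
    exact hno (toHub_of_isRoute _ _ (hroute p x) hx)
  choose u hu huB using hmeet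
  refine absurd (Finset.card_le_card_of_injOn (s := Finset.univ) (t := B) u (fun x _ => huB x) ?_)
    (by simpa using hB)
  intro x _ y _ hxy
  by_contra hne
  exact hdisj p x y hne _ (hu x) _ (hu y) hxy

/-- The arithmetic behind the Petersen piece. Here `s`, `e`, `h` indicate the used spokes, hexagon
edges and hub edges. Every cluster has exactly one edge that is not used, by `hj` and `hi`. If some
hub edge is used, then exactly two are, the edges not used form a perfect matching of the Petersen
graph, and the used ones form two pentagons, one of which avoids the hub, contrary to `hpent`.
Otherwise nine edges between the nine clusters are used, contrary to `hall`. -/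
lemma petersen_arith (s e : Fin 6 → ℕ) (h : Fin 3 → ℕ) (hs : ∀ j, s j ≤ 1) (he : ∀ j, e j ≤ 1)
    (hh : ∀ i, h i ≤ 1) (hj : ∀ j, s j + e j + e (j - 1) = 2)
    (hi : ∀ i, h i + s (Fin.castAdd 3 i) + s (Fin.natAdd 3 i) = 2)
    (hpent : ∀ j : Fin 6, s j + s (j + 3) + e j + e (j + 1) + e (j + 2) ≤ 4)
    (hall : ∑ j, s j + ∑ j, e j ≤ 8) : False := by
  have j0 : s 0 + e 0 + e 5 = 2 := hj 0
  have j1 : s 1 + e 1 + e 0 = 2 := hj 1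
  have j2 : s 2 + e 2 + e 1 = 2 := hj 2
  have j3 : s 3 + e 3 + e 2 = 2 := hj 3
  have j4 : s 4 + e 4 + e 3 = 2 := hj 4
  have j5 : s 5 + e 5 + e 4 = 2 := hj 5
  have i0 : h 0 + s 0 + s 3 = 2 := hi 0
  have i1 : h 1 + s 1 + s 4 = 2 := hi 1
  have i2 : h 2 + s 2 + s 5 = 2 := hi 2
  have p0 : s 0 + s 3 + e 0 + e 1 + e 2 ≤ 4 := hpent 0
  have p1 : s 1 + s 4 + e 1 + e 2 + e 3 ≤ 4 := hpent 1
  have p2 : s 2 + s 5 + e 2 + e 3 + e 4 ≤ 4 := hpent 2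
  have p3 : s 3 + s 0 + e 3 + e 4 + e 5 ≤ 4 := hpent 3
  have p4 : s 4 + s 1 + e 4 + e 5 + e 0 ≤ 4 := hpent 4
  have p5 : s 5 + s 2 + e 5 + e 0 + e 1 ≤ 4 := hpent 5
  rw [Fin.sum_univ_six, Fin.sum_univ_six] at hall
  have hb : ∀ j, s j = 0 ∨ s j = 1 := fun j => by have := hs j; omega
  have h0 := hh 0
  have h1 := hh 1
  have h2 := hh 2
  have e0 := he 0
  have e1 := he 1
  have e2 := he 2
  have e3 := he 3
  have e4 := he 4
  have e5 := he 5
  have b0 := hb 0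
  have b1 := hb 1
  have b2 := hb 2
  have b3 := hb 3
  have b4 := hb 4
  have b5 := hb 5
  clear hs he hh hj hi hpent hb
  generalize s 0 = s0 at *
  generalize e 0 = x0 at *
  generalize s 1 = s1 at *
  generalize e 1 = x1 at *
  generalize s 2 = s2 at *
  generalize e 2 = x2 at *
  generalize s 3 = s3 at *
  generalize e 3 = x3 at *
  generalize s 4 = s4 at *
  generalize e 4 = x4 at *
  generalize s 5 = s5 at *
  generalize e 5 = x5 at *
  generalize h 0 = y0 at *
  generalize h 1 = y1 at *
  generalize h 2 = y2 at *
  rcases b0 with rfl | rfl <;> rcases b1 with rfl | rfl <;> rcases b2 with rfl | rfl <;>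
    rcases b3 with rfl | rfl <;> rcases b4 with rfl | rfl <;> rcases b5 with rfl | rfl <;>
    omega

/-- The bounds for `S` the clusters of a pentagon and for `S` the set of all clusters rule out a
local packing, by `petersen_arith`. -/
lemma not_localPacking_petersen : ¬ LocalPacking 1 petersenPiece := by
  rintro ⟨U, τ, hτ, hout, hS⟩
  classical
  have hslots : ∀ w o, petersenPiece w = some o → w = fstSlot o ∨ w = sndSlot o := by decide
  have hfst : ∀ o, petersenPiece (fstSlot o) = some o := by decide
  have hsnd : ∀ o, petersenPiece (sndSlot o) = some o := by decide
  have m12 : ∀ o, fstSlot o ∈ U → τ (fstSlot o) = sndSlot o ∧ sndSlot o ∈ U := fun o ho =>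
    mate_eq hτ ho (by simp [hfst]) fun w hw => hslots w o (hw.trans (hfst o))
  have m21 : ∀ o, sndSlot o ∈ U → τ (sndSlot o) = fstSlot o ∧ fstSlot o ∈ U := fun o ho =>
    mate_eq hτ ho (by simp [hsnd]) fun w hw => (hslots w o (hw.trans (hsnd o))).symm
  let χ : PClus × Fin 3 → ℕ := fun u => if u ∈ U then 1 else 0
  have hχ : ∀ u, χ u ≤ 1 := fun u => by
    simp only [χ]
    split_ifs <;> simp
  have hχeq : ∀ o, χ (sndSlot o) = χ (fstSlot o) := fun o => by
    have : sndSlot o ∈ U ↔ fstSlot o ∈ U := ⟨fun h => (m21 o h).2, fun h => (m12 o h).2⟩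
    simp only [χ, this]
  have hdeg : ∀ p, χ (p, 0) + χ (p, 1) + χ (p, 2) = 2 := by
    intro p
    have := hout p
    rw [outer, Nat.card_eq_fintype_card, Fintype.card_subtype, Finset.card_filter,
      Fin.sum_univ_three] at this
    exact this
  have hsub : ∀ (S : Finset PClus) (F : Finset (Fin 6 ⊕ Fin 6)), S.Nonempty →
      (∀ o ∈ F, (fstSlot o).1 ∈ S ∧ (sndSlot o).1 ∈ S) →
      ∑ o ∈ F, χ (fstSlot o) ≤ S.card - 1 := by
    intro S F hne hF
    have := card_used_le (ι := {o // o ∈ F}) hS S hne (fun o => fstSlot o.1)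
      (fun o => sndSlot o.1)
      (fun o o' h => Subtype.ext (Option.some_injective _ (by rw [← hfst, ← hfst]; exact congrArg _ h)))
      (fun o o' h => Subtype.ext (Option.some_injective _ (by rw [← hsnd, ← hsnd]; exact congrArg _ h)))
      (fun o o' => (by decide : ∀ o o', fstSlot o ≠ sndSlot o') _ _)
      (fun o => (hF _ o.2).1) (fun o => (hF _ o.2).2) (by simp [hfst]) (by simp [hsnd])
      (fun o => m12 o) (fun o => m21 o)
    rw [one_mul, Nat.card_eq_fintype_card, Fintype.card_subtype, Finset.card_filter] at this
    rwa [← Finset.sum_coe_sort F fun o => χ (fstSlot o)]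
  refine petersen_arith (fun j => χ (fstSlot (.inl j))) (fun j => χ (fstSlot (.inr j)))
    (fun i => χ (.inl i, 0)) (fun _ => hχ _) (fun _ => hχ _) (fun _ => hχ _) ?_ ?_ ?_ ?_
  · intro j
    have := hχeq (.inr (j - 1))
    simp only [sndSlot, sub_add_cancel] at this
    rw [← this]
    exact hdeg (.inr j)
  · intro i
    have h1 : sndSlot (.inl (Fin.castAdd 3 i)) = (.inl i, 1) :=
      (by decide : ∀ i : Fin 3, sndSlot (.inl (Fin.castAdd 3 i)) = (.inl i, 1)) i
    have h2 : sndSlot (.inl (Fin.natAdd 3 i)) = (.inl i, 2) :=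
      (by decide : ∀ i : Fin 3, sndSlot (.inl (Fin.natAdd 3 i)) = (.inl i, 2)) i
    rw [← hχeq, ← hχeq, h1, h2]
    exact hdeg (.inl i)
  · intro j
    -- the pentagon through the hexagon vertices `j`, `j + 1`, `j + 2`, `j + 3`
    have := hsub {.inl (centre j), .inr j, .inr (j + 1), .inr (j + 2), .inr (j + 3)}
      {.inl j, .inl (j + 3), .inr j, .inr (j + 1), .inr (j + 2)} ⟨.inr j, by simp⟩
      (by revert j; decide)
    rw [Finset.sum_insert (by simp), Finset.sum_insert (by simp), Finset.sum_insert (by simp),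
      Finset.sum_insert (by simp), Finset.sum_singleton] at this
    have hcard : (_ : Finset PClus).card ≤ 5 := Finset.card_le_five (a := .inl (centre j))
      (b := .inr j) (c := .inr (j + 1)) (d := .inr (j + 2)) (e := .inr (j + 3))
    omega
  · have := hsub Finset.univ Finset.univ ⟨.inl 0, by simp⟩ (by simp)
    rw [Fintype.sum_sum_type] at this
    exact this

end Petersen

/-! ### Counterexamples for all powers of two -/

/-- For every `ℓ ≥ 0` and every `n`, there is a finite graph
with terminals `(G, T)` with at least `n` vertices such that `T` is
`3·2^ℓ`-edge-connected in `G`, but `G` does not contain `2^ℓ` pairwise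
edge-disjoint `T`-connectors. -/
theorem infinitely_many_counterexamples (ℓ n : ℕ) :
    ∃ (V E : Type) (_ : Fintype V) (_ : Fintype E) (ends : E → Sym2 V) (T : Set V),
      n ≤ Nat.card V ∧
      EdgeConnectedIn ends T (3 * 2 ^ ℓ) ∧
      ¬ ∃ Q : Fin (2 ^ ℓ) → Set E,
          (∀ i, IsConnector ends T (Q i)) ∧
          Pairwise fun i j => Disjoint (Q i) (Q j) := by
  cases ℓ with
  | zero =>
    exact counterexample_of_piece (g₀ := petersenPiece) (k := 2 ^ 0) (by simp)
      (fun B hB p => toHub_petersen hB p) not_localPacking_petersen n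
  | succ ℓ =>
    -- bundles of `3 * 2 ^ ℓ` slots make clusters with `3 * 2 ^ (ℓ + 1)` slots
    have e : 3 * 2 ^ (ℓ + 1) = 2 * (3 * 2 ^ ℓ) := by ring
    exact counterexample_of_piece (g₀ := evenPiece (3 * 2 ^ ℓ)) (by simp [e])
      (fun B hB p => toHub_even (hB.trans_eq e) p) (not_localPacking_even (by positivity)) n

end TConnectors
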